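/- arXiv:1406.1887 — 2 statements merged into one kernel-verified Lean document; each statement's English description precedes it below -/
import Mathlib

section
/- Let n and k be integers with 1 ≤ k ≤ ⌈n/2⌉ and k+1 ≤ n, and let G be a nonempty Sperner family of subsets of [n] with |F| ≤ k for every F ∈ G. Let x ≥ n−k−1 be the real number satisfying C(x, n−k) = |G|. Then the shade satisfies |∇_{k+1}(G)| ≥ C(x, n−k−1). -/
/-- The generalized binomial coefficient `C(x,j) = x(x−1)⋯(x−j+1)/j!` for real `x`. -/
noncomputable def genChoose (x : ℝ) (j : ℕ) : ℝ :=
  (descPochhammer ℝ j).eval x / (Nat.factorial j)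

/-- The `j`-shade of a family `G` of subsets of `[n]`. -/
def shadeAt (n j : ℕ) (G : Finset (Finset (Fin n))) : Finset (Finset (Fin n)) :=
  Finset.univ.filter (fun S => S.card = j ∧ ∃ F ∈ G, F ⊂ S)

/-!
Passing to complements turns the shade into a shadow: with `r = n - k - 1`, the sets of size `r + 1`
below `Gᶜˢ` have their shadow inside the complements of `∇_{k+1}(G)`. There are at least `|G|` of
them, by the weighted LYM inequality and the monotonicity of `C(n, ·)` up to `⌈n/2⌉`, so the
real-parameter Lovász form of the Kruskal–Katona theorem applies.

The latter follows Keevash's vertex-degree argument, in a form that avoids inverting `C(·, r)`: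
if `y ≥ r ≥ 1` and `|∂𝒜| ≤ C(y, r)` then `(r + 1) |𝒜| ≤ (y - r) |∂𝒜|`, which rules out
`|∂𝒜| < C(x, r)` because `(r + 1) C(x, r + 1) = (x - r) C(x, r)`. For a vertex `v` let `𝒜ᵥ` be the
link of `v` in `𝒜` and `d` the degree of `v` in `∂𝒜`. Then `r |𝒜ᵥ| ≤ (y - r) d`: if
`d ≥ C(y - 1, r - 1)`, because `𝒜ᵥ` consists of members of `∂𝒜` avoiding `v`; otherwise `r ≥ 2` or
`𝒜ᵥ` is empty, and induction applies because `∂𝒜ᵥ` lies in the link of `v` in `∂𝒜`. Summing over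
`v` gives the claim.
-/

open Finset
open scoped FinsetFamily

section GenChoose

lemma genChoose_zero (x : ℝ) : genChoose x 0 = 1 := by
  simp [genChoose]

lemma genChoose_self (r : ℕ) : genChoose r r = 1 := by
  rw [genChoose, descPochhammer_eval_eq_descFactorial, Nat.descFactorial_self]
  exact div_self (by positivity)

lemma succ_mul_genChoose_succ (x : ℝ) (r : ℕ) :
    (r + 1) * genChoose x (r + 1) = (x - r) * genChoose x r := by
  rw [genChoose, genChoose, descPochhammer_succ_eval, Nat.factorial_succ]
  push_cast
  field_simp

lemma genChoose_succ (x : ℝ) (r : ℕ) :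
    genChoose x (r + 1) = genChoose (x - 1) r + genChoose (x - 1) (r + 1) := by
  have eval_left : (descPochhammer ℝ (r + 1)).eval x = x * (descPochhammer ℝ r).eval (x - 1) := by
    simp [descPochhammer_succ_left]
  have eval_right : (descPochhammer ℝ (r + 1)).eval (x - 1) =
      (descPochhammer ℝ r).eval (x - 1) * (x - 1 - r) :=
    descPochhammer_succ_eval r (x - 1)
  rw [genChoose, genChoose, genChoose, eval_left, eval_right, Nat.factorial_succ]
  push_cast
  field_simp
  ring

end GenChoose

section Shadow

variable {α : Type*} [DecidableEq α] {𝒜 : Finset (Finset α)} {r : ℕ}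

lemma shadow_nonempty_of_sized_succ (h𝒜 : (𝒜 : Set (Finset α)).Sized (r + 1)) (hne : 𝒜.Nonempty) :
    (∂ 𝒜).Nonempty := by
  obtain ⟨s, hs⟩ := hne
  obtain ⟨a, ha⟩ := card_pos.1 (r.succ_pos.trans_eq (h𝒜 hs).symm)
  exact ⟨s.erase a, erase_mem_shadow hs ha⟩

lemma sized_memberSubfamily (h𝒜 : (𝒜 : Set (Finset α)).Sized (r + 1)) (v : α) :
    (𝒜.memberSubfamily v : Set (Finset α)).Sized r := by
  intro s hs
  obtain ⟨hvs, hv⟩ := mem_memberSubfamily.1 hs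
  simpa [card_insert_of_notMem hv] using h𝒜 hvs

lemma memberSubfamily_subset_nonMemberSubfamily_shadow (𝒜 : Finset (Finset α)) (v : α) :
    𝒜.memberSubfamily v ⊆ (∂ 𝒜).nonMemberSubfamily v := by
  intro s hs
  obtain ⟨hvs, hv⟩ := mem_memberSubfamily.1 hs
  exact mem_nonMemberSubfamily.2 ⟨mem_shadow_iff_insert_mem.2 ⟨v, hv, hvs⟩, hv⟩

lemma shadow_memberSubfamily_subset (𝒜 : Finset (Finset α)) (v : α) :
    ∂ (𝒜.memberSubfamily v) ⊆ (∂ 𝒜).memberSubfamily v := by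
  intro s hs
  obtain ⟨a, has, ha⟩ := mem_shadow_iff_insert_mem.1 hs
  obtain ⟨hva, hv⟩ := mem_memberSubfamily.1 ha
  obtain ⟨hne, hvs⟩ : v ≠ a ∧ v ∉ s := by simpa using hv
  refine mem_memberSubfamily.2 ⟨mem_shadow_iff_insert_mem.2 ⟨a, ?_, ?_⟩, hvs⟩
  · simp [hne.symm, has]
  · rwa [insert_comm]

lemma card_memberSubfamily (𝒜 : Finset (Finset α)) (v : α) :
    #(𝒜.memberSubfamily v) = #{s ∈ 𝒜 | v ∈ s} := by
  have split_card := card_memberSubfamily_add_card_nonMemberSubfamily v 𝒜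
  rw [← card_filter_add_card_filter_not (s := 𝒜) (v ∈ ·)] at split_card
  exact Nat.add_right_cancel split_card

lemma sum_card_memberSubfamily {U : Finset α} (h𝒜 : (𝒜 : Set (Finset α)).Sized r)
    (hU : ∀ s ∈ 𝒜, s ⊆ U) : ∑ v ∈ U, #(𝒜.memberSubfamily v) = r * #𝒜 := by
  have card_filter_mem (s : Finset α) (hs : s ∈ 𝒜) : #{v ∈ U | v ∈ s} = r := by
    rw [filter_mem_eq_inter, inter_eq_right.2 (hU s hs), h𝒜 hs]
  calc ∑ v ∈ U, #(𝒜.memberSubfamily v)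
      = ∑ v ∈ U, #{s ∈ 𝒜 | v ∈ s} := by simp_rw [card_memberSubfamily]
    _ = ∑ s ∈ 𝒜, #{v ∈ U | v ∈ s} := sum_card_bipartiteAbove_eq_sum_card_bipartiteBelow (· ∈ ·)
    _ = r * #𝒜 := by rw [sum_const_nat card_filter_mem, mul_comm]

lemma succ_mul_card_memberSubfamily_le_of_genChoose_le {y : ℝ} (hy : (r + 1 : ℕ) ≤ y)
    (hshadow : #(∂ 𝒜) ≤ genChoose y (r + 1)) {v : α}
    (hdeg : genChoose (y - 1) r ≤ #((∂ 𝒜).memberSubfamily v)) :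
    (r + 1 : ℕ) * (#(𝒜.memberSubfamily v) : ℝ) ≤
      (y - (r + 1 : ℕ)) * #((∂ 𝒜).memberSubfamily v) := by
  have split_shadow : (#((∂ 𝒜).memberSubfamily v) : ℝ) + #((∂ 𝒜).nonMemberSubfamily v) = #(∂ 𝒜) :=
    mod_cast card_memberSubfamily_add_card_nonMemberSubfamily v (∂ 𝒜)
  have avoiding_le : (#(𝒜.memberSubfamily v) : ℝ) ≤ #((∂ 𝒜).nonMemberSubfamily v) :=
    mod_cast card_le_card (memberSubfamily_subset_nonMemberSubfamily_shadow 𝒜 v)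
  have link_le : (#(𝒜.memberSubfamily v) : ℝ) ≤ genChoose (y - 1) (r + 1) := by
    linarith [genChoose_succ y r]
  push_cast at hy ⊢
  calc (r + 1) * (#(𝒜.memberSubfamily v) : ℝ)
      ≤ (r + 1) * genChoose (y - 1) (r + 1) := by gcongr
    _ = (y - (r + 1)) * genChoose (y - 1) r := by rw [succ_mul_genChoose_succ]; ring
    _ ≤ (y - (r + 1)) * #((∂ 𝒜).memberSubfamily v) := by
      have : 0 ≤ y - (r + 1) := sub_nonneg.2 hy
      gcongr

lemma succ_mul_card_le_of_forall_memberSubfamily (h𝒜 : (𝒜 : Set (Finset α)).Sized (r + 1))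
    (hr : r ≠ 0) {c : ℝ}
    (hlink : ∀ v, r * (#(𝒜.memberSubfamily v) : ℝ) ≤ c * #((∂ 𝒜).memberSubfamily v)) :
    (r + 1) * (#𝒜 : ℝ) ≤ c * #(∂ 𝒜) := by
  set U := 𝒜.biUnion id
  have subset_U : ∀ s ∈ 𝒜, s ⊆ U := fun s hs ↦ subset_biUnion_of_mem id hs
  have shadow_subset_U (s : Finset α) (hs : s ∈ ∂ 𝒜) : s ⊆ U := by
    obtain ⟨t, ht, hst⟩ := exists_subset_of_mem_shadow hs
    exact hst.trans (subset_U t ht)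
  have sum_links : ∑ v ∈ U, (#(𝒜.memberSubfamily v) : ℝ) = (r + 1) * #𝒜 :=
    mod_cast sum_card_memberSubfamily h𝒜 subset_U
  have sum_degrees : ∑ v ∈ U, (#((∂ 𝒜).memberSubfamily v) : ℝ) = r * #(∂ 𝒜) :=
    mod_cast sum_card_memberSubfamily (r := r) h𝒜.shadow shadow_subset_U
  have hr_pos : (0 : ℝ) < r := by positivity
  refine le_of_mul_le_mul_left ?_ hr_pos
  calc r * ((r + 1) * (#𝒜 : ℝ))
      = ∑ v ∈ U, r * (#(𝒜.memberSubfamily v) : ℝ) := by rw [← mul_sum, sum_links]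
    _ ≤ ∑ v ∈ U, c * (#((∂ 𝒜).memberSubfamily v) : ℝ) := sum_le_sum fun v _ ↦ hlink v
    _ = r * (c * #(∂ 𝒜)) := by rw [← mul_sum, sum_degrees]; ring

theorem succ_mul_card_le_mul_card_shadow (hr : r ≠ 0)
    (h𝒜 : (𝒜 : Set (Finset α)).Sized (r + 1)) {y : ℝ} (hy : r ≤ y)
    (hshadow : #(∂ 𝒜) ≤ genChoose y r) :
    (r + 1) * (#𝒜 : ℝ) ≤ (y - r) * #(∂ 𝒜) := by
  induction r generalizing 𝒜 y with
  | zero => exact absurd rfl hr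
  | succ r ih =>
    refine succ_mul_card_le_of_forall_memberSubfamily h𝒜 hr fun v ↦ ?_
    rcases (𝒜.memberSubfamily v).eq_empty_or_nonempty with hempty | hne
    · rw [hempty, card_empty, Nat.cast_zero, mul_zero]
      exact mul_nonneg (sub_nonneg.2 hy) (Nat.cast_nonneg _)
    rcases le_or_gt (genChoose (y - 1) r) #((∂ 𝒜).memberSubfamily v) with hlarge | hsmall
    · exact succ_mul_card_memberSubfamily_le_of_genChoose_le hy hshadow hlarge
    have link_sized := sized_memberSubfamily h𝒜 v
    have shadow_link_le : (#(∂ (𝒜.memberSubfamily v)) : ℝ) ≤ #((∂ 𝒜).memberSubfamily v) :=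
      mod_cast card_le_card (shadow_memberSubfamily_subset 𝒜 v)
    have one_le_shadow_link : (1 : ℝ) ≤ #(∂ (𝒜.memberSubfamily v)) :=
      mod_cast (shadow_nonempty_of_sized_succ link_sized hne).card_pos
    have hr0 : r ≠ 0 := by
      rintro rfl
      rw [genChoose_zero] at hsmall
      linarith
    push_cast at hy ⊢
    calc (r + 1) * (#(𝒜.memberSubfamily v) : ℝ)
        ≤ (y - 1 - r) * #(∂ (𝒜.memberSubfamily v)) :=
          ih hr0 link_sized (by linarith) (shadow_link_le.trans hsmall.le)
      _ ≤ (y - 1 - r) * #((∂ 𝒜).memberSubfamily v) := by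
          have : 0 ≤ y - 1 - r := by linarith
          gcongr
      _ = (y - (r + 1)) * #((∂ 𝒜).memberSubfamily v) := by ring

theorem genChoose_le_card_shadow (h𝒜 : (𝒜 : Set (Finset α)).Sized (r + 1))
    (hne : 𝒜.Nonempty) {x : ℝ} (hx : r ≤ x) (hcard : genChoose x (r + 1) ≤ #𝒜) :
    genChoose x r ≤ #(∂ 𝒜) := by
  have one_le_shadow : (1 : ℝ) ≤ #(∂ 𝒜) :=
    mod_cast (shadow_nonempty_of_sized_succ h𝒜 hne).card_pos
  by_contra! hlt
  have hr : r ≠ 0 := by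
    rintro rfl
    rw [genChoose_zero] at hlt
    linarith
  have hrx : (r : ℝ) < x := by
    refine lt_of_le_of_ne hx ?_
    rintro rfl
    rw [genChoose_self] at hlt
    linarith
  have : (x - r) * genChoose x r ≤ (x - r) * #(∂ 𝒜) := by
    calc (x - r) * genChoose x r
        = (r + 1) * genChoose x (r + 1) := (succ_mul_genChoose_succ x r).symm
      _ ≤ (r + 1) * #𝒜 := by gcongr
      _ ≤ (x - r) * #(∂ 𝒜) := succ_mul_card_le_mul_card_shadow hr h𝒜 hx hlt.le
  exact hlt.not_ge (le_of_mul_le_mul_left this (sub_pos.2 hrx))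

end Shadow

section Shade

lemma choose_le_choose_of_le_of_two_mul_le {n k r : ℕ} (hrk : r ≤ k) (hk : 2 * k ≤ n + 1) :
    n.choose r ≤ n.choose k := by
  induction k, hrk using Nat.le_induction with
  | base => exact le_rfl
  | succ k _ ih =>
    refine (ih (by lia)).trans (Nat.le_of_mul_le_mul_right ?_ k.succ_pos)
    calc n.choose k * (k + 1) ≤ n.choose k * (n - k) := by gcongr; lia
      _ = n.choose (k + 1) * (k + 1) := (Nat.choose_succ_right_eq n k).symm

variable {α : Type*} [Fintype α] {k : ℕ}

lemma sum_card_slice_card_sub {𝒜 : Finset (Finset α)} (hkn : k ≤ Fintype.card α)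
    (hsize : ∀ s ∈ 𝒜, Fintype.card α ≤ #s + k) :
    ∑ r ∈ range (k + 1), #(𝒜 # (Fintype.card α - r)) = #𝒜 := by
  have codim_mem_range (s : Finset α) (hs : s ∈ 𝒜) : Fintype.card α - #s ∈ range (k + 1) := by
    have := hsize s hs
    rw [mem_range]
    lia
  rw [card_eq_sum_card_fiberwise codim_mem_range]
  refine sum_congr rfl fun r hr ↦ congr_arg card (filter_congr fun s _ ↦ ?_)
  have := s.card_le_univ
  have := mem_range.1 hr
  lia

variable [DecidableEq α]

theorem card_le_card_falling {𝒜 : Finset (Finset α)} (hk : 2 * k ≤ Fintype.card α + 1)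
    (hkn : k ≤ Fintype.card α) (h𝒜 : IsAntichain (· ⊆ ·) (𝒜 : Set (Finset α)))
    (hsize : ∀ s ∈ 𝒜, Fintype.card α ≤ #s + k) :
    #𝒜 ≤ #(falling (Fintype.card α - k) 𝒜) := by
  set n := Fintype.card α
  have choose_pos (r : ℕ) : (0 : ℚ) < n.choose (n - r) :=
    mod_cast Nat.choose_pos (Nat.sub_le n r)
  have choose_le (r : ℕ) (hr : r ∈ range (k + 1)) : n.choose (n - r) ≤ n.choose (n - k) := by
    have hrk : r ≤ k := mem_range_succ_iff.1 hr
    rw [Nat.choose_symm hkn, Nat.choose_symm (hrk.trans hkn)]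
    exact choose_le_choose_of_le_of_two_mul_le hrk hk
  have weighted : (#𝒜 : ℚ) / n.choose (n - k) ≤ #(falling (n - k) 𝒜) / n.choose (n - k) := by
    calc (#𝒜 : ℚ) / n.choose (n - k)
        = ∑ r ∈ range (k + 1), (#(𝒜 # (n - r)) : ℚ) / n.choose (n - k) := by
          rw [← sum_card_slice_card_sub hkn hsize, Nat.cast_sum, sum_div]
      _ ≤ ∑ r ∈ range (k + 1), (#(𝒜 # (n - r)) : ℚ) / n.choose (n - r) := by
          gcongr with r hr
          · exact choose_pos r
          · exact choose_le r hr
      _ ≤ #(falling (n - k) 𝒜) / n.choose (n - k) := le_card_falling_div_choose hkn h𝒜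
  exact mod_cast (div_le_div_iff_of_pos_right (choose_pos k)).1 weighted

variable {G : Finset (Finset α)}

lemma card_le_card_falling_compls (hk : 2 * k ≤ Fintype.card α + 1) (hkn : k ≤ Fintype.card α)
    (hsp : IsAntichain (· ⊆ ·) (G : Set (Finset α))) (hsize : ∀ F ∈ G, #F ≤ k) :
    #G ≤ #(falling (Fintype.card α - k) Gᶜˢ) := by
  have compls_antichain : IsAntichain (· ⊆ ·) (Gᶜˢ : Set (Finset α)) := by
    rw [coe_compls]
    exact hsp.image_compl
  have compls_size (s : Finset α) (hs : s ∈ Gᶜˢ) : Fintype.card α ≤ #s + k := by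
    have := hsize _ (mem_compls.1 hs)
    rw [card_compl] at this
    lia
  simpa only [card_compls] using card_le_card_falling hk hkn compls_antichain compls_size

lemma card_shadow_falling_compls_le (hsize : ∀ F ∈ G, #F ≤ k) :
    #(∂ (falling (Fintype.card α - k) Gᶜˢ)) ≤
      #{S : Finset α | #S = k + 1 ∧ ∃ F ∈ G, F ⊂ S} := by
  rw [← card_compls (∂ _)]
  refine card_le_card fun S hS ↦ ?_
  obtain ⟨T, hT, hST, hcard⟩ := mem_shadow_iff_exists_mem_card_add_one.1 (mem_compls.1 hS)
  obtain ⟨⟨F, hF, hTF⟩, hTcard⟩ := mem_falling.1 hT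
  have card_S : #S = k + 1 := by
    have := card_add_card_compl S
    lia
  have compl_subset : Fᶜ ⊆ S := compl_le_iff_compl_le.1 (hST.trans hTF)
  have compl_mem : Fᶜ ∈ G := mem_compls.1 hF
  have compl_ne : Fᶜ ≠ S := by
    rintro rfl
    exact (hsize _ compl_mem).not_gt (by lia)
  exact mem_filter.2 ⟨mem_univ S, card_S, Fᶜ, compl_mem, compl_subset.ssubset_of_ne compl_ne⟩

theorem shade_bound_general (hk : k ≤ (Fintype.card α + 1) / 2) (hkn : k + 1 ≤ Fintype.card α)
    (hne : G.Nonempty) (hsp : IsAntichain (· ⊆ ·) (G : Set (Finset α)))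
    (hsize : ∀ F ∈ G, #F ≤ k) {x : ℝ} (hx : (Fintype.card α : ℝ) - k - 1 ≤ x)
    (hcard : genChoose x (Fintype.card α - k) ≤ #G) :
    genChoose x (Fintype.card α - k - 1) ≤ #{S : Finset α | #S = k + 1 ∧ ∃ F ∈ G, F ⊂ S} := by
  obtain ⟨r, hr⟩ : ∃ r, Fintype.card α = r + 1 + k := ⟨Fintype.card α - k - 1, by lia⟩
  have card_sub : Fintype.card α - k = r + 1 := by lia
  have card_le := card_le_card_falling_compls (by lia) (by lia) hsp hsize
  have shadow_le := card_shadow_falling_compls_le hsize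
  rw [card_sub] at hcard card_le shadow_le
  rw [card_sub, Nat.add_sub_cancel]
  have falling_nonempty : (falling (r + 1) Gᶜˢ).Nonempty :=
    card_pos.1 (hne.card_pos.trans_le card_le)
  have hrx : (r : ℝ) ≤ x := by
    rw [hr] at hx
    push_cast at hx
    linarith
  calc genChoose x r
      ≤ #(∂ (falling (r + 1) Gᶜˢ)) :=
        genChoose_le_card_shadow (sized_falling _ _) falling_nonempty hrx
          (hcard.trans (mod_cast card_le))
    _ ≤ #{S : Finset α | #S = k + 1 ∧ ∃ F ∈ G, F ⊂ S} := mod_cast shadow_le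

end Shade

/-- Lemma (shade bound): if `G` is a nonempty Sperner family of sets of size at most `k`
(with `1 ≤ k ≤ ⌈n/2⌉`, `k+1 ≤ n`) and `x ≥ n−k−1` is the real with `C(x,n−k) = |G|`,
then `|∇_{k+1}(G)| ≥ C(x,n−k−1)`. -/
theorem shade_bound (n k : ℕ) (h1 : 1 ≤ k) (h2 : k ≤ (n + 1) / 2) (h3 : k + 1 ≤ n)
    (G : Finset (Finset (Fin n))) (hne : G.Nonempty)
    (hsp : IsAntichain (· ⊆ ·) (G : Set (Finset (Fin n))))
    (hsize : ∀ F ∈ G, F.card ≤ k)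
    (x : ℝ) (hx : (n : ℝ) - k - 1 ≤ x) (hxc : genChoose x (n - k) = G.card) :
    genChoose x (n - k - 1) ≤ ((shadeAt n (k + 1) G).card : ℝ) := by
  simpa only [shadeAt, Fintype.card_fin] using shade_bound_general (α := Fin n) (by simpa using h2)
    (by simpa using h3) hne hsp hsize (by simpa using hx) (by simpa using hxc.le)
end

section
/- Let n ≥ 8 and let F ⊆ 2^[n] be a butterfly-free family with ∅ ∉ F and [n] ∉ F, and set M = {M ∈ F : there exist F, F′ ∈ F with F ⊊ M ⊊ F′}. Then |F| ≤ Σ(n,2) − |M|/3. -/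
def IsButterfly {n : ℕ} (S : Finset (Finset (Fin n))) : Prop :=
  ∃ A B C D : Finset (Fin n), S = {A, B, C, D} ∧ A ≠ B ∧ C ≠ D ∧
    A ⊂ C ∧ A ⊂ D ∧ B ⊂ C ∧ B ⊂ D

def ButterflyFree {n : ℕ} (F : Finset (Finset (Fin n))) : Prop :=
  ∀ S ⊆ F, ¬ IsButterfly S

def Sigma2 (n : ℕ) : ℕ := n.choose (n / 2) + n.choose (n / 2 + 1)

/-! A uniformly random numbering of the ground set has a chain of prefixes. The middle elements of
a butterfly-free family `F` form an antichain, so at most one of them is a prefix; if none is, then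
at most two members of `F` are. If `m` members of `F` and `μ` middle elements are prefixes, then in
both cases `m + μ * (2 - m) ≤ 2`. A middle element `X` is comparable to exactly two other members
of `F`, one below and one above it, and given that `X` is a prefix, these are prefixes with
probability at most `1 / |X|` and `1 / |Xᶜ|`. Taking expectations yields the LYM-type inequality
`∑ X ∈ F, 1 / C(n, |X|) + ∑ X ∈ M, (1 - 1 / |X| - 1 / |Xᶜ|) / C(n, |X|) ≤ 2`. Multiply it by
`C(n, n / 2 + 1)`, which is at least `C(n, k)` for all `k ≠ n / 2`: the sets of size `n / 2` cost
`C(n, n / 2) - C(n, n / 2 + 1)` in the first sum, and for `n ≥ 8` every summand of the second one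
becomes at least `1 / 3`. -/

open Finset Numbering
open scoped Nat

section Poset

variable {P : Type*} [PartialOrder P] {F : Finset P}

/-- The butterfly-free families of an arbitrary poset, in the form in which the condition is used:
two distinct members have at most one common strict upper bound in the family. -/
def NoButterfly (F : Finset P) : Prop :=
  ∀ ⦃A⦄, A ∈ F → ∀ ⦃B⦄, B ∈ F → ∀ ⦃C⦄, C ∈ F → ∀ ⦃D⦄, D ∈ F →
    A ≠ B → A < C → A < D → B < C → B < D → C = D

open scoped Classical in
/-- The middle elements of the three-element chains in `F`. -/
noncomputable def middles (F : Finset P) : Finset P :=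
  {X ∈ F | ∃ A ∈ F, ∃ B ∈ F, A < X ∧ X < B}

lemma mem_middles {X : P} :
    X ∈ middles F ↔ X ∈ F ∧ ∃ A ∈ F, ∃ B ∈ F, A < X ∧ X < B := by
  simp [middles]

namespace NoButterfly

lemma isAntichain_middles (hF : NoButterfly F) :
    IsAntichain (· ≤ ·) (middles F : Set P) := by
  intro X hX Y hY hne hle
  obtain ⟨hXF, A, hA, -, -, hAX, -⟩ := mem_middles.1 hX
  obtain ⟨hYF, -, -, B, hB, -, hYB⟩ := mem_middles.1 hY
  have hXY : X < Y := lt_of_le_of_ne hle hne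
  exact hYB.ne (hF hA hXF hYF hB hAX.ne (hAX.trans hXY) (hAX.trans (hXY.trans hYB)) hXY
    (hXY.trans hYB))

lemma exists_lt_lt_of_mem_middles (hF : NoButterfly F) {X : P} (hX : X ∈ middles F) :
    ∃ A ∈ F, ∃ B ∈ F, A < X ∧ X < B ∧ ∀ Y ∈ F, Y ≤ X ∨ X ≤ Y → Y = A ∨ Y = X ∨ Y = B := by
  obtain ⟨hXF, A, hA, B, hB, hAX, hXB⟩ := mem_middles.1 hX
  refine ⟨A, hA, B, hB, hAX, hXB, fun Y hY hcomp ↦ ?_⟩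
  have eq_of_lt (hYX : Y < X) : Y = A := by
    by_contra hne
    exact hXB.ne (hF hY hA hXF hB hne hYX (hYX.trans hXB) hAX (hAX.trans hXB))
  have eq_of_gt (hXY : X < Y) : Y = B :=
    hF hA hXF hY hB hAX.ne (hAX.trans hXY) (hAX.trans hXB) hXY hXB
  rcases hcomp with hle | hge
  · rcases hle.lt_or_eq with hlt | rfl
    exacts [.inl (eq_of_lt hlt), .inr (.inl rfl)]
  · rcases hge.lt_or_eq with hlt | rfl
    exacts [.inr (.inr (eq_of_gt hlt)), .inr (.inl rfl)]

end NoButterfly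

variable {p : P → Prop} [DecidablePred p]

lemma card_filter_le_two_of_isChain (hp : IsChain (· ≤ ·) {X | p X})
    (hmid : ∀ X ∈ middles F, ¬ p X) : #{X ∈ F | p X} ≤ 2 := by
  by_contra! hcard
  obtain ⟨X, hX, Y, hY, Z, hZ, hXY, hXZ, hYZ⟩ := two_lt_card.1 hcard
  simp only [mem_filter] at hX hY hZ
  have not_between {A B C : P} (hA : A ∈ F) (hB : B ∈ F ∧ p B) (hC : C ∈ F) (hAB : A < B) :
      ¬ B < C := fun hBC ↦ hmid B (mem_middles.2 ⟨hB.1, A, hA, C, hC, hAB, hBC⟩) hB.2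
  have lt_or_gt {A B : P} (hA : A ∈ F ∧ p A) (hB : B ∈ F ∧ p B) (hne : A ≠ B) : A < B ∨ B < A :=
    (hp.total hA.2 hB.2).imp (lt_of_le_of_ne · hne) (lt_of_le_of_ne · hne.symm)
  grind

lemma NoButterfly.card_filter_add_card_filter_middles_mul_le (hF : NoButterfly F)
    (hp : IsChain (· ≤ ·) {X | p X}) :
    (#{X ∈ F | p X} + #{X ∈ middles F | p X} * (2 - #{X ∈ F | p X}) : ℝ) ≤ 2 := by
  by_cases hmid : ∃ X ∈ middles F, p X
  · have hcard : #{X ∈ middles F | p X} = 1 := by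
      refine le_antisymm (card_le_one.2 fun X hX Y hY ↦ ?_) ?_
      · rw [mem_filter] at hX hY
        exact inter_subsingleton_of_isAntichain_of_isChain hF.isAntichain_middles hp hX hY
      · simpa [one_le_card, filter_nonempty_iff] using hmid
    rw [hcard]
    simp
  · push Not at hmid
    have hcard : (#{X ∈ F | p X} : ℝ) ≤ 2 := mod_cast card_filter_le_two_of_isChain hp hmid
    simpa [filter_eq_empty_iff.2 hmid] using hcard

end Poset

section MiddleCard

variable {α : Type*} {F : Finset (Finset α)} {X : Finset α}

lemma two_le_card_of_mem_middles (hempty : ∅ ∉ F) (hX : X ∈ middles F) : 2 ≤ #X := by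
  obtain ⟨-, A, hA, -, -, hAX, -⟩ := mem_middles.1 hX
  have hApos := card_pos.2 (nonempty_iff_ne_empty.2 (ne_of_mem_of_not_mem hA hempty))
  have hlt := card_lt_card hAX
  omega

lemma two_le_card_compl_of_mem_middles [Fintype α] [DecidableEq α] (huniv : univ ∉ F)
    (hX : X ∈ middles F) : 2 ≤ #Xᶜ := by
  obtain ⟨-, -, -, B, hB, -, hXB⟩ := mem_middles.1 hX
  have hBlt := (card_lt_iff_ne_univ B).2 (ne_of_mem_of_not_mem hB huniv)
  have hlt := card_lt_card hXB
  rw [card_compl]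
  omega

end MiddleCard

section Binomial

variable {n k l : ℕ}

lemma self_le_choose (hk : k ≠ 0) (hkn : k < n) : n ≤ n.choose k := by
  induction n generalizing k with
  | zero => omega
  | succ n ih =>
    obtain ⟨k, rfl⟩ := Nat.exists_eq_succ_of_ne_zero hk
    rw [Nat.choose_succ_succ]
    rcases (Nat.lt_succ_iff.1 hkn).lt_or_eq with hlt | rfl
    · have := ih k.succ_ne_zero hlt
      have := Nat.choose_pos (k.le_succ.trans hlt.le)
      omega
    · simp

lemma antitoneOn_choose (n : ℕ) : AntitoneOn n.choose (Set.Ici (n / 2)) := by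
  refine antitoneOn_nat_Ici_of_succ_le fun k hk ↦ ?_
  refine Nat.le_of_mul_le_mul_right ?_ k.succ_pos
  rw [Nat.choose_succ_right_eq]
  gcongr
  omega

lemma choose_le_choose_half_add_one (hk : k ≠ n / 2) : n.choose k ≤ n.choose (n / 2 + 1) := by
  rcases hk.lt_or_gt with hlt | hgt
  · rw [← Nat.choose_symm (by omega : k ≤ n)]
    exact antitoneOn_choose n (by simp) (by simp; omega) (by omega)
  · exact antitoneOn_choose n (by simp) (by simp; omega) hgt

lemma one_third_le_one_sub_inv_sub_inv (hk : 2 ≤ k) (hl : 2 ≤ l) (hkl : 8 ≤ k + l) :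
    (1 / 3 : ℝ) ≤ 1 - (k : ℝ)⁻¹ - (l : ℝ)⁻¹ := by
  have hk' : (2 : ℝ) ≤ k := mod_cast hk
  have hl' : (2 : ℝ) ≤ l := mod_cast hl
  have hkl' : (8 : ℝ) ≤ k + l := mod_cast hkl
  have hsub : 1 - (k : ℝ)⁻¹ - (l : ℝ)⁻¹ = (k * l - l - k) / (k * l) := by field_simp
  rw [hsub, div_le_div_iff₀ (by norm_num) (by positivity)]
  nlinarith [mul_nonneg (sub_nonneg.2 hk') (sub_nonneg.2 hl')]

lemma choose_half_div_three_le (hk : k = (k + l) / 2) (hkl : 8 ≤ k + l) :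
    ((k + l).choose k / 3 : ℝ) ≤
      (k + l).choose (k + 1) * (1 - (k : ℝ)⁻¹ - (l : ℝ)⁻¹) := by
  have hk4 : (4 : ℝ) ≤ k := mod_cast (by omega : 4 ≤ k)
  have hlk : (k : ℝ) ≤ l := mod_cast (by omega : k ≤ l)
  have hsucc : ((k + l).choose (k + 1) * (k + 1) : ℝ) = (k + l).choose k * l := by
    have := Nat.choose_succ_right_eq (k + l) k
    rw [Nat.add_sub_cancel_left] at this
    exact_mod_cast this
  have hratio : ((k + l).choose k * (4 / 5) : ℝ) ≤ (k + l).choose (k + 1) := by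
    have hchoose : (0 : ℝ) ≤ (k + l).choose k := Nat.cast_nonneg _
    have hprod := mul_nonneg hchoose (by linarith : (0 : ℝ) ≤ 5 * l - 4 * (k + 1))
    refine le_of_mul_le_mul_right ?_ (by positivity : (0 : ℝ) < k + 1)
    linarith
  have hkinv : (k : ℝ)⁻¹ ≤ 4⁻¹ := inv_anti₀ (by norm_num) hk4
  have hlinv : (l : ℝ)⁻¹ ≤ 4⁻¹ := inv_anti₀ (by norm_num) (hk4.trans hlk)
  calc ((k + l).choose k / 3 : ℝ) ≤ (k + l).choose k * (4 / 5) * (1 / 2) := by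
        have : (0 : ℝ) ≤ (k + l).choose k := Nat.cast_nonneg _
        linarith
    _ ≤ (k + l).choose (k + 1) * (1 - (k : ℝ)⁻¹ - (l : ℝ)⁻¹) := by
        gcongr
        linarith

lemma choose_div_three_le (hk : 2 ≤ k) (hl : 2 ≤ l) (hkl : 8 ≤ k + l) :
    ((k + l).choose k / 3 : ℝ) ≤
      (k + l).choose ((k + l) / 2 + 1) * (1 - (k : ℝ)⁻¹ - (l : ℝ)⁻¹) := by
  by_cases hmid : k = (k + l) / 2
  · rw [← hmid]
    exact choose_half_div_three_le hmid hkl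
  · rw [div_eq_mul_one_div]
    gcongr
    · exact choose_le_choose_half_add_one hmid
    · exact one_third_le_one_sub_inv_sub_inv hk hl hkl

end Binomial

section PrefixCounting

variable {α : Type*} {F : Finset (Finset α)} {S T X : Finset α}

lemma card_subtype_of_subset [DecidableEq α] (hST : S ⊆ T) : #(S.subtype (· ∈ T)) = #S := by
  rw [card_subtype, filter_true_of_mem fun _ hx ↦ hST hx]

variable [Fintype α]

lemma isChain_isPrefix (f : Numbering α) : IsChain (· ≤ ·) {X | IsPrefix f X} :=
  fun _ hX _ hY _ ↦ (le_total _ _).imp (hX.subset_of_card_le_card hY)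
    (hY.subset_of_card_le_card hX)

variable [DecidableEq α]

lemma isPrefix_prefixedEquiv_iff (hST : S ⊆ T) (f : prefixed T) :
    IsPrefix (prefixedEquiv T f).1 (S.subtype (· ∈ T)) ↔ IsPrefix f.1 S := by
  simp only [IsPrefix, card_subtype_of_subset hST, mem_subtype, Subtype.forall]
  refine ⟨fun h x ↦ ?_, fun h x _ ↦ h x⟩
  by_cases hx : x ∈ T
  · exact h x hx
  · have hTx := (mem_prefixed.1 f.2 x).not.1 hx
    have := card_le_card hST
    exact iff_of_false (fun hxS ↦ hx (hST hxS)) (by omega)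

lemma card_prefixed_inter_prefixed (hST : S ⊆ T) :
    #(prefixed S ∩ prefixed T) = (#S)! * (#T - #S)! * (Fintype.card α - #T)! := by
  calc #(prefixed S ∩ prefixed T)
      = #(prefixed (S.subtype (· ∈ T)) ×ˢ (univ : Finset (Numbering ↑(Tᶜ)))) := by
        refine card_bij (fun f hf ↦ prefixedEquiv T ⟨f, (mem_inter.1 hf).2⟩) ?_ ?_ ?_
        · intro f hf
          simpa [isPrefix_prefixedEquiv_iff hST] using mem_prefixed.1 (mem_inter.1 hf).1
        · intro f hf g hg h
          simpa using h
        · intro g hg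
          obtain ⟨f, rfl⟩ := (prefixedEquiv T).surjective g
          rw [mem_product, mem_prefixed, isPrefix_prefixedEquiv_iff hST] at hg
          exact ⟨f, mem_inter.2 ⟨mem_prefixed.2 hg.1, f.2⟩, rfl⟩
    _ = _ := by
        rw [card_product, card_prefixed, card_subtype_of_subset hST, card_univ,
          Fintype.card_numbering]
        simp

lemma card_prefixed_inter_prefixed_mul_choose_card (hST : S ⊆ T) :
    #(prefixed S ∩ prefixed T) * (#T).choose #S = #(prefixed T) := by
  rw [card_prefixed_inter_prefixed hST, card_prefixed,
    ← Nat.choose_mul_factorial_mul_factorial (card_le_card hST)]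
  ring

lemma card_prefixed_inter_prefixed_mul_choose_card_compl (hST : S ⊆ T) :
    #(prefixed S ∩ prefixed T) * (#Sᶜ).choose (#T - #S) = #(prefixed S) := by
  have hS := card_le_card hST
  have hT := card_le_univ T
  rw [card_prefixed_inter_prefixed hST, card_prefixed, card_compl,
    ← Nat.choose_mul_factorial_mul_factorial (by omega : #T - #S ≤ Fintype.card α - #S),
    show Fintype.card α - #S - (#T - #S) = Fintype.card α - #T by omega]
  ring

lemma card_prefixed_inter_prefixed_mul_card_le (hS : S.Nonempty) (hST : S ⊂ T) :
    #(prefixed S ∩ prefixed T) * #T ≤ #(prefixed T) := by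
  rw [← card_prefixed_inter_prefixed_mul_choose_card hST.subset]
  gcongr
  exact self_le_choose hS.card_ne_zero (card_lt_card hST)

lemma card_prefixed_inter_prefixed_mul_card_compl_le (hST : S ⊂ T) (hT : T ≠ univ) :
    #(prefixed S ∩ prefixed T) * #Sᶜ ≤ #(prefixed S) := by
  rw [← card_prefixed_inter_prefixed_mul_choose_card_compl hST.subset]
  have hlt := card_lt_card hST
  have hlt_univ := (card_lt_iff_ne_univ T).2 hT
  gcongr
  exact self_le_choose (by omega) (by rw [card_compl]; omega)

lemma sum_card_filter_isPrefix_mul {R : Type*} [NonAssocSemiring R] (F : Finset (Finset α))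
    (w : Numbering α → R) :
    ∑ f, #{X ∈ F | IsPrefix f X} * w f = ∑ X ∈ F, ∑ f ∈ prefixed X, w f := by
  simp only [← nsmul_eq_mul, ← sum_const]
  exact sum_comm' (by simp [and_comm])

lemma sum_card_filter_isPrefix (s : Finset (Numbering α)) (F : Finset (Finset α)) :
    ∑ f ∈ s, #{X ∈ F | IsPrefix f X} = ∑ X ∈ F, #(s ∩ prefixed X) := by
  simp only [prefixed, ← filter_mem_eq_inter, mem_filter, mem_univ, true_and]
  exact sum_card_bipartiteAbove_eq_sum_card_bipartiteBelow _

lemma card_prefixed_eq_mul_inv_choose (X : Finset α) :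
    (#(prefixed X) : ℝ) = (Fintype.card α)! * ((Fintype.card α).choose #X : ℝ)⁻¹ := by
  have hchoose : ((Fintype.card α).choose #X : ℝ) ≠ 0 :=
    mod_cast (Nat.choose_pos X.card_le_univ).ne'
  rw [eq_mul_inv_iff_mul_eq₀ hchoose, card_prefixed,
    ← Nat.choose_mul_factorial_mul_factorial X.card_le_univ]
  push_cast
  ring

namespace NoButterfly

lemma sum_card_prefixed_add_sum_middles_le (hF : NoButterfly F) :
    ∑ X ∈ F, (#(prefixed X) : ℝ) + ∑ X ∈ middles F,
      (2 * (#(prefixed X) : ℝ) - ∑ Y ∈ F, (#(prefixed X ∩ prefixed Y) : ℝ)) ≤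
      (Fintype.card α)! * 2 := by
  have hmembers : ∑ X ∈ F, (#(prefixed X) : ℝ) =
      ∑ f : Numbering α, (#{X ∈ F | IsPrefix f X} : ℝ) := by
    have := sum_card_filter_isPrefix univ F
    simp only [univ_inter] at this
    exact_mod_cast this.symm
  have hmiddles : ∑ X ∈ middles F,
      (2 * (#(prefixed X) : ℝ) - ∑ Y ∈ F, (#(prefixed X ∩ prefixed Y) : ℝ)) =
      ∑ f, #{X ∈ middles F | IsPrefix f X} * (2 - #{X ∈ F | IsPrefix f X} : ℝ) := by
    rw [sum_card_filter_isPrefix_mul]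
    refine sum_congr rfl fun X _ ↦ ?_
    rw [sum_sub_distrib, sum_const, nsmul_eq_mul, mul_comm (2 : ℝ)]
    exact_mod_cast congrArg _ (sum_card_filter_isPrefix (prefixed X) F).symm
  rw [hmembers, hmiddles, ← sum_add_distrib]
  simpa using sum_le_card_nsmul (univ : Finset (Numbering α)) _ _ fun f _ ↦
    hF.card_filter_add_card_filter_middles_mul_le (isChain_isPrefix f)

lemma sum_card_prefixed_inter_prefixed_le (hF : NoButterfly F) (hempty : ∅ ∉ F)
    (huniv : univ ∉ F) (hX : X ∈ middles F) :
    ∑ Y ∈ F, (#(prefixed X ∩ prefixed Y) : ℝ) ≤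
      (1 + (#X : ℝ)⁻¹ + (#Xᶜ : ℝ)⁻¹) * #(prefixed X) := by
  obtain ⟨A, hA, B, hB, hAX, hXB, hcomp⟩ := hF.exists_lt_lt_of_mem_middles hX
  have hXpos : (0 : ℝ) < #X := mod_cast two_pos.trans_le (two_le_card_of_mem_middles hempty hX)
  have hXcpos : (0 : ℝ) < #Xᶜ :=
    mod_cast two_pos.trans_le (two_le_card_compl_of_mem_middles huniv hX)
  have hbelow : (#(prefixed X ∩ prefixed A) : ℝ) ≤ #(prefixed X) / #X := by
    rw [le_div_iff₀ hXpos, inter_comm]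
    exact_mod_cast card_prefixed_inter_prefixed_mul_card_le
      (nonempty_iff_ne_empty.2 (ne_of_mem_of_not_mem hA hempty)) hAX
  have habove : (#(prefixed X ∩ prefixed B) : ℝ) ≤ #(prefixed X) / #Xᶜ := by
    rw [le_div_iff₀ hXcpos]
    exact_mod_cast card_prefixed_inter_prefixed_mul_card_compl_le hXB
      (ne_of_mem_of_not_mem hB huniv)
  have hother (Y) (hY : Y ∈ F) (hYABX : Y ∉ ({A, X, B} : Finset (Finset α))) :
      (#(prefixed X ∩ prefixed Y) : ℝ) = 0 := by
    have hincomp : ¬ (Y ⊆ X ∨ X ⊆ Y) := fun h ↦ hYABX (by simpa using hcomp Y hY h)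
    rw [not_or] at hincomp
    simpa [← disjoint_iff_inter_eq_empty] using disjoint_prefixed_prefixed hincomp.2 hincomp.1
  have hsub : ({A, X, B} : Finset (Finset α)) ⊆ F := by
    simp [insert_subset_iff, hA, hB, (mem_middles.1 hX).1]
  calc ∑ Y ∈ F, (#(prefixed X ∩ prefixed Y) : ℝ)
    _ = ∑ Y ∈ {A, X, B}, (#(prefixed X ∩ prefixed Y) : ℝ) := (sum_subset hsub hother).symm
    _ = #(prefixed X ∩ prefixed A) + (#(prefixed X) + #(prefixed X ∩ prefixed B)) := by
      rw [sum_insert (by simp [hAX.ne, (hAX.trans hXB).ne]), sum_pair hXB.ne, inter_self]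
    _ ≤ #(prefixed X) / #X + (#(prefixed X) + #(prefixed X) / #Xᶜ) := by gcongr
    _ = _ := by ring

theorem sum_inv_choose_add_sum_middles_le_two (hF : NoButterfly F) (hempty : ∅ ∉ F)
    (huniv : univ ∉ F) :
    ∑ X ∈ F, ((Fintype.card α).choose #X : ℝ)⁻¹ + ∑ X ∈ middles F,
      (1 - (#X : ℝ)⁻¹ - (#Xᶜ : ℝ)⁻¹) * ((Fintype.card α).choose #X : ℝ)⁻¹ ≤ 2 := by
  refine le_of_mul_le_mul_left ?_ (by positivity : (0 : ℝ) < (Fintype.card α)!)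
  refine le_trans ?_ hF.sum_card_prefixed_add_sum_middles_le
  simp only [mul_add, mul_sum, mul_left_comm _ (1 - _ - _ : ℝ), ← card_prefixed_eq_mul_inv_choose]
  gcongr with X hX
  have := hF.sum_card_prefixed_inter_prefixed_le hempty huniv hX
  linarith

end NoButterfly

end PrefixCounting

section FamilySize

variable {α : Type*} [Fintype α]

lemma card_le_choose_mul_sum_inv_choose_add (F : Finset (Finset α)) :
    (#F : ℝ) ≤ (Fintype.card α).choose (Fintype.card α / 2 + 1) *
        ∑ X ∈ F, ((Fintype.card α).choose #X : ℝ)⁻¹ +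
      ((Fintype.card α).choose (Fintype.card α / 2) -
        (Fintype.card α).choose (Fintype.card α / 2 + 1)) := by
  set n := Fintype.card α
  set c := (n.choose (n / 2 + 1) : ℝ)
  set N := (n.choose (n / 2) : ℝ)
  have hNpos : 0 < N := Nat.cast_pos.2 (Nat.choose_pos (by omega))
  have hcN : 0 ≤ 1 - c * N⁻¹ := by
    rw [sub_nonneg, ← div_eq_mul_inv, div_le_one hNpos]
    exact Nat.cast_le.2 (Nat.choose_le_middle _ _)
  have hterm (X) (_ : X ∈ F) :
      (1 : ℝ) ≤ c * (n.choose #X : ℝ)⁻¹ + if #X = n / 2 then 1 - c * N⁻¹ else 0 := by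
    split_ifs with hX
    · rw [hX]
      linarith
    · rw [add_zero, ← div_eq_mul_inv, one_le_div (mod_cast Nat.choose_pos X.card_le_univ)]
      exact Nat.cast_le.2 (choose_le_choose_half_add_one hX)
  have hlevel : (#{X ∈ F | #X = n / 2} : ℝ) ≤ N := Nat.cast_le.2 sized_slice.card_le
  calc (#F : ℝ) = ∑ _ ∈ F, (1 : ℝ) := by simp
    _ ≤ ∑ X ∈ F, (c * (n.choose #X : ℝ)⁻¹ + if #X = n / 2 then 1 - c * N⁻¹ else 0) :=
      sum_le_sum hterm
    _ = c * ∑ X ∈ F, (n.choose #X : ℝ)⁻¹ + #{X ∈ F | #X = n / 2} * (1 - c * N⁻¹) := by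
      rw [sum_add_distrib, ← mul_sum, ← sum_filter, sum_const, nsmul_eq_mul]
    _ ≤ c * ∑ X ∈ F, (n.choose #X : ℝ)⁻¹ + N * (1 - c * N⁻¹) := by gcongr
    _ = _ := by field_simp

variable {F : Finset (Finset α)}

lemma card_middles_div_three_le [DecidableEq α] (hα : 8 ≤ Fintype.card α) (hempty : ∅ ∉ F)
    (huniv : univ ∉ F) :
    (#(middles F) / 3 : ℝ) ≤ (Fintype.card α).choose (Fintype.card α / 2 + 1) *
      ∑ X ∈ middles F,
        (1 - (#X : ℝ)⁻¹ - (#Xᶜ : ℝ)⁻¹) * ((Fintype.card α).choose #X : ℝ)⁻¹ := by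
  rw [mul_sum, div_eq_mul_one_div, ← nsmul_eq_mul]
  refine card_nsmul_le_sum _ _ _ fun X hX ↦ ?_
  have hchoose : (0 : ℝ) < (Fintype.card α).choose #X := mod_cast Nat.choose_pos X.card_le_univ
  rw [← mul_assoc, ← div_eq_mul_inv, le_div_iff₀ hchoose, one_div_mul_eq_div]
  rw [← card_add_card_compl X] at hα ⊢
  exact choose_div_three_le (two_le_card_of_mem_middles hempty hX)
    (two_le_card_compl_of_mem_middles huniv hX) hα

theorem butterfly_free_minus_middles_general (hα : 8 ≤ Fintype.card α) (hF : NoButterfly F)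
    (hempty : ∅ ∉ F) (huniv : univ ∉ F) :
    (#F : ℝ) ≤ Sigma2 (Fintype.card α) - #(middles F) / 3 := by
  classical
  have hlym := hF.sum_inv_choose_add_sum_middles_le_two hempty huniv
  have hscaled := mul_le_mul_of_nonneg_left hlym
    (Nat.cast_nonneg ((Fintype.card α).choose (Fintype.card α / 2 + 1)))
  have hfamily := card_le_choose_mul_sum_inv_choose_add F
  have hmiddles := card_middles_div_three_le hα hempty huniv
  rw [Sigma2, Nat.cast_add]
  linarith

end FamilySize

lemma ButterflyFree.noButterfly {n : ℕ} {F : Finset (Finset (Fin n))} (hF : ButterflyFree F) :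
    NoButterfly F := by
  intro A hA B hB C hC D hD hAB hAC hAD hBC hBD
  by_contra hCD
  exact hF {A, B, C, D} (by simp [insert_subset_iff, hA, hB, hC, hD])
    ⟨A, B, C, D, rfl, hAB, hCD, hAC, hAD, hBC, hBD⟩

/-- If `F ⊆ 2^[n]` is butterfly-free with `∅, [n] ∉ F` and `M` is the set of middle elements
of 3-chains in `F`, then `|F| ≤ Σ(n,2) − |M|/3`. -/
theorem butterfly_free_minus_middles (n : ℕ) (hn : 8 ≤ n) (F : Finset (Finset (Fin n)))
    (hempty : ∅ ∉ F) (huniv : Finset.univ ∉ F) (hbf : ButterflyFree F)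
    (M : Finset (Finset (Fin n)))
    (hM : M = F.filter (fun X => ∃ A ∈ F, ∃ B ∈ F, A ⊂ X ∧ X ⊂ B)) :
    (F.card : ℝ) ≤ (Sigma2 n : ℝ) - (M.card : ℝ) / 3 := by
  have hmiddles : M = middles F := by ext; rw [hM, mem_middles, mem_filter]
  simpa [hmiddles] using
    butterfly_free_minus_middles_general (by simpa using hn) hbf.noButterfly hempty huniv
end
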